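/- (Step I of Theorem 1 of the paper: forgetting the outcomes is always at least as precise for estimating the coefficient of the traceless part.) Let α, x, φ ∈ ℝ with 0 < α < 1, 0 < x < α, x < 1−α and 0 < φ < π. Set h := √(α²−x²) + √((1−α)²−x²). Then √(α²−x²)·√((1−α)²−x²)·√(1−h²)/(x·h) ≤ √(α²−x²)·(α + x·cos φ)²/(α·sin φ) + √((1−α)²−x²)·(1−α − x·cos φ)²/((1−α)·sin φ); i.e., the optimal outcome-forgotten error for estimating β = x is at most the outcome-remembered error for every pure qubit probe with polar angle φ. -/

import Mathlib

/-!
Put `a = α`, `b = 1 - α`, `p = √(a² - x²)` and `q = √(b² - x²)`. Then `a` and `b` are two sides of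
a triangle whose altitude `x` cuts the third side into segments `p` and `q`. The Cauchy-Schwarz
inequality, applied to `(a + y) + (b - y) = 1` with `y = x cos φ`, bounds the remembered error from
below by `p q / (a q + b p)`, uniformly in the probe. Heron's formula for the area `x (p + q) / 2`
gives `(a q + b p) √(1 - (p + q)²) ≤ x (p + q)`, so this bound is at least the forgotten error.
-/

lemma add_sq_mul_div_le_mul_sq_div_add {K : Type*} [Field K] [LinearOrder K]
    [IsStrictOrderedRing K] {a b p q : K} (ha : 0 < a) (hb : 0 < b) (hp : 0 < p) (hq : 0 < q)
    (c d : K) :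
    (c + d) ^ 2 * (p * q) / (a * q + b * p) ≤ p * c ^ 2 / a + q * d ^ 2 / b := by
  have weights_pos : ∀ i ∈ Finset.univ, 0 < ![a / p, b / q] i := by
    simp only [Fin.forall_fin_two, Finset.mem_univ, true_imp_iff]
    exact ⟨div_pos ha hp, div_pos hb hq⟩
  have cauchy_schwarz : (c + d) ^ 2 / (a / p + b / q) ≤ c ^ 2 / (a / p) + d ^ 2 / (b / q) := by
    simpa only [Fin.sum_univ_two, Matrix.cons_val_zero, Matrix.cons_val_one] using
      Finset.sq_sum_div_le_sum_sq_div Finset.univ ![c, d] weights_pos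
  convert cauchy_schwarz using 1 <;> field_simp

section Altitude

variable {R : Type*} [CommRing R] {a b p q x : R}

/- Heron's formula reads `((a + b)² - c²) (c² - (a - b)²) = (2 c x)²` with `c = p + q`. Multiplied
by `(a + b)²`, its second factor is `c² ((a + b)² - (p - q)²)`, so that `c²` cancels. -/
lemma heron_of_altitude (hp : p ^ 2 = a ^ 2 - x ^ 2) (hq : q ^ 2 = b ^ 2 - x ^ 2) :
    ((a + b) ^ 2 - (p + q) ^ 2) * ((a + b) ^ 2 - (p - q) ^ 2) = (2 * (a + b) * x) ^ 2 := by
  have segments : (p + q) * (p - q) = (a + b) * (a - b) := by linear_combination hp - hq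
  linear_combination ((p + q) * (p - q) + (a + b) * (a - b)) * segments -
    2 * (a + b) ^ 2 * (hp + hq)

lemma two_mul_add_mul_cross_of_altitude (hp : p ^ 2 = a ^ 2 - x ^ 2)
    (hq : q ^ 2 = b ^ 2 - x ^ 2) :
    2 * (a + b) * (a * q + b * p) = (p + q) * ((a + b) ^ 2 - (p - q) ^ 2) := by
  linear_combination (q - p) * (hq - hp)

lemma cross_sq_mul_of_altitude [NoZeroDivisors R] [NeZero (2 : R)] (hab : a + b ≠ 0)
    (hp : p ^ 2 = a ^ 2 - x ^ 2) (hq : q ^ 2 = b ^ 2 - x ^ 2) :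
    (a * q + b * p) ^ 2 * ((a + b) ^ 2 - (p + q) ^ 2) =
      (x * (p + q)) ^ 2 * ((a + b) ^ 2 - (p - q) ^ 2) := by
  have scale_ne_zero : (2 * (a + b)) ^ 2 ≠ 0 := pow_ne_zero 2 (mul_ne_zero two_ne_zero hab)
  apply mul_left_cancel₀ scale_ne_zero
  calc (2 * (a + b)) ^ 2 * ((a * q + b * p) ^ 2 * ((a + b) ^ 2 - (p + q) ^ 2))
      = (2 * (a + b) * (a * q + b * p)) ^ 2 * ((a + b) ^ 2 - (p + q) ^ 2) := by ring
    _ = (p + q) ^ 2 * ((a + b) ^ 2 - (p - q) ^ 2) *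
          (((a + b) ^ 2 - (p + q) ^ 2) * ((a + b) ^ 2 - (p - q) ^ 2)) := by
        rw [two_mul_add_mul_cross_of_altitude hp hq]; ring
    _ = (2 * (a + b)) ^ 2 * ((x * (p + q)) ^ 2 * ((a + b) ^ 2 - (p - q) ^ 2)) := by
        rw [heron_of_altitude hp hq]; ring

end Altitude

section Real

variable {a b p q x : ℝ}

lemma cross_mul_sqrt_le_of_altitude (ha : 0 < a) (hb : 0 < b) (hp0 : 0 ≤ p) (hq0 : 0 ≤ q)
    (hx : 0 ≤ x) (hp : p ^ 2 = a ^ 2 - x ^ 2) (hq : q ^ 2 = b ^ 2 - x ^ 2) :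
    (a * q + b * p) * √((a + b) ^ 2 - (p + q) ^ 2) ≤ (a + b) * (x * (p + q)) := by
  rw [← Real.sqrt_sq (by positivity : 0 ≤ a * q + b * p), ← Real.sqrt_mul (sq_nonneg _)]
  refine Real.sqrt_le_iff.mpr ⟨by positivity, ?_⟩
  calc (a * q + b * p) ^ 2 * ((a + b) ^ 2 - (p + q) ^ 2)
      = (x * (p + q)) ^ 2 * ((a + b) ^ 2 - (p - q) ^ 2) :=
        cross_sq_mul_of_altitude (add_pos ha hb).ne' hp hq
    _ ≤ (x * (p + q)) ^ 2 * (a + b) ^ 2 := by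
        gcongr
        exact sub_le_self _ (sq_nonneg _)
    _ = ((a + b) * (x * (p + q))) ^ 2 := by ring

lemma add_mul_mul_sqrt_div_le_of_altitude {c d : ℝ} (ha : 0 < a) (hb : 0 < b) (hp0 : 0 < p)
    (hq0 : 0 < q) (hx : 0 < x) (hp : p ^ 2 = a ^ 2 - x ^ 2) (hq : q ^ 2 = b ^ 2 - x ^ 2)
    (hcd : c + d = a + b) :
    (a + b) * (p * q * √((a + b) ^ 2 - (p + q) ^ 2) / (x * (p + q))) ≤
      p * c ^ 2 / a + q * d ^ 2 / b := by
  have sqrt_div_le : √((a + b) ^ 2 - (p + q) ^ 2) / (x * (p + q)) ≤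
      (a + b) / (a * q + b * p) := by
    rw [div_le_div_iff₀ (by positivity) (by positivity), mul_comm (√_)]
    exact cross_mul_sqrt_le_of_altitude ha hb hp0.le hq0.le hx.le hp hq
  calc (a + b) * (p * q * √((a + b) ^ 2 - (p + q) ^ 2) / (x * (p + q)))
      = (a + b) * (p * q) * (√((a + b) ^ 2 - (p + q) ^ 2) / (x * (p + q))) := by ring
    _ ≤ (a + b) * (p * q) * ((a + b) / (a * q + b * p)) := by gcongr
    _ = (c + d) ^ 2 * (p * q) / (a * q + b * p) := by rw [hcd]; ring
    _ ≤ p * c ^ 2 / a + q * d ^ 2 / b := add_sq_mul_div_le_mul_sq_div_add ha hb hp0 hq0 c d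

end Real

/-- Step I of Theorem 1 of the paper: for estimating the coefficient `β = x` of the
traceless part of the POVM, the optimal outcome-forgotten error is at most the
outcome-remembered error for every pure qubit probe with polar angle `φ`. -/
theorem stmt_18 (α x φ : ℝ)
    (hα0 : 0 < α) (hα1 : α < 1) (hx0 : 0 < x) (hxα : x < α) (hxα' : x < 1 - α)
    (hφ0 : 0 < φ) (hφπ : φ < Real.pi)
    (h : ℝ) (hh : h = Real.sqrt (α ^ 2 - x ^ 2) + Real.sqrt ((1 - α) ^ 2 - x ^ 2)) :
    Real.sqrt (α ^ 2 - x ^ 2) * Real.sqrt ((1 - α) ^ 2 - x ^ 2) *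
        Real.sqrt (1 - h ^ 2) / (x * h)
      ≤ Real.sqrt (α ^ 2 - x ^ 2) * (α + x * Real.cos φ) ^ 2 / (α * Real.sin φ)
        + Real.sqrt ((1 - α) ^ 2 - x ^ 2) * (1 - α - x * Real.cos φ) ^ 2
            / ((1 - α) * Real.sin φ) := by
  have hβ0 : 0 < 1 - α := sub_pos.mpr hα1
  have hp : 0 < α ^ 2 - x ^ 2 := sub_pos.mpr (by gcongr)
  have hq : 0 < (1 - α) ^ 2 - x ^ 2 := sub_pos.mpr (by gcongr)
  have forgotten_le := add_mul_mul_sqrt_div_le_of_altitude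
    (c := α + x * Real.cos φ) (d := 1 - α - x * Real.cos φ) hα0 hβ0
    (Real.sqrt_pos.mpr hp) (Real.sqrt_pos.mpr hq) hx0
    (Real.sq_sqrt hp.le) (Real.sq_sqrt hq.le) (by ring)
  rw [add_sub_cancel, one_mul, one_pow, ← hh] at forgotten_le
  rw [← div_div _ α, ← div_div _ (1 - α), ← add_div]
  exact forgotten_le.trans <| le_div_self (by positivity)
    (Real.sin_pos_of_pos_of_lt_pi hφ0 hφπ) (Real.sin_le_one φ)
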